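/- Let L ≥ 2, 0 ≤ N ≤ L be integers, let 0 < q < 1 and let α, a be real numbers. Consider site rates α_1 = α, α_n = a for 2 ≤ n ≤ L−1 and α_L = 0, and let P_N be the normalized closed-ASEP stationary measure on N-element subsets of {1,...,L}. Then the sector-N expectation A_N = ∑_{B} P_N(B) ∑_{n ∈ B} α_n equals ( a(N−1) + a q^N + (α − a) q^{L−N} + (a − α − aN) q^L ) / (1 − q^L). -/

import Mathlib

/-!
Write `Z_{L,N}` for the sum of `q ^ w(B)` over the `N`-particle sector and `ρ_n` for the
probability that site `n` is occupied. By linearity of expectation `A_N = ∑ n, α_n ρ_n`, and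
`∑ n, ρ_n = N`, so `A_N = a N + (α - a) ρ_1 - a ρ_L`: only the two boundary densities matter.

Deleting the last site preserves the exponent `w(B)` if the site is occupied and lowers it by `N`
if it is empty; deleting the first site and relabelling the others lowers it by `L - N` if the site
is occupied and preserves it if it is empty. Thus
`Z_{L,N} = Z_{L-1,N-1} + q ^ N Z_{L-1,N}` and `Z_{L,N} = q ^ (L-N) Z_{L-1,N-1} + Z_{L-1,N}`.
Eliminating `Z_{L-1,N}` leaves `(1 - q ^ N) Z_{L,N} = (1 - q ^ L) Z_{L-1,N-1}`. Iterating this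
identity gives the product formula for `Z_{L,N}`, and a single application gives both boundary
densities: `ρ_L = Z_{L-1,N-1} / Z_{L,N}` and `ρ_1 = q ^ (L-N) ρ_L`.
-/

open Finset

/-- The set of sites `{1, ..., L}`. -/
def sites (L : ℕ) : Finset ℕ := Finset.Icc 1 L

/-- `W L N` : the collection of `N`-element subsets of `{1, ..., L}`
(the `N`-particle sector). -/
def W (L N : ℕ) : Finset (Finset ℕ) := Finset.powersetCard N (sites L)

/-- The exponent `w(B) = ∑_{j=1}^N (L − j + 1 − n_j)` for `B = {n_1 < ... < n_N}`,
written as `∑_{n ∈ B} (L + 1 − n) − ∑_{j=1}^N j`. -/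
def wgt (L : ℕ) (B : Finset ℕ) : ℤ :=
  (∑ n ∈ B, ((L : ℤ) + 1 - (n : ℤ))) - ((B.card * (B.card + 1)) / 2 : ℕ)

section PowersetCard

variable {ι M : Type*} [DecidableEq ι] [AddCommMonoid M] {x : ι} {s : Finset ι}

lemma filter_notMem_powersetCard_insert (hx : x ∉ s) (n : ℕ) :
    {B ∈ powersetCard n (insert x s) | x ∉ B} = powersetCard n s := by
  ext B
  simp only [mem_filter, mem_powersetCard]
  constructor
  · rintro ⟨⟨hB, hcard⟩, hxB⟩
    exact ⟨(subset_insert_iff_of_notMem hxB).1 hB, hcard⟩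
  · rintro ⟨hB, hcard⟩
    exact ⟨⟨hB.trans (subset_insert x s), hcard⟩, fun h ↦ hx (hB h)⟩

lemma sum_filter_mem_powersetCard_insert (hx : x ∉ s) (n : ℕ) (f : Finset ι → M) :
    ∑ B ∈ powersetCard (n + 1) (insert x s) with x ∈ B, f B
      = ∑ C ∈ powersetCard n s, f (insert x C) := by
  have notMem_of_mem {C : Finset ι} (hC : C ∈ powersetCard n s) : x ∉ C :=
    fun h ↦ hx ((mem_powersetCard.1 hC).1 h)
  refine sum_nbij' (fun B ↦ B.erase x) (fun C ↦ insert x C) ?_ ?_ ?_ ?_ ?_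
  · intro B hB
    obtain ⟨hBs, hxB⟩ := mem_filter.1 hB
    obtain ⟨hsub, hcard⟩ := mem_powersetCard.1 hBs
    exact mem_powersetCard.2 ⟨subset_insert_iff.1 hsub, by rw [card_erase_of_mem hxB, hcard]; rfl⟩
  · intro C hC
    obtain ⟨hsub, hcard⟩ := mem_powersetCard.1 hC
    refine mem_filter.2 ⟨mem_powersetCard.2 ⟨insert_subset_insert x hsub, ?_⟩, mem_insert_self x C⟩
    rw [card_insert_of_notMem (notMem_of_mem hC), hcard]
  · exact fun B hB ↦ insert_erase (mem_filter.1 hB).2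
  · exact fun C hC ↦ erase_insert (notMem_of_mem hC)
  · exact fun B hB ↦ by rw [insert_erase (mem_filter.1 hB).2]

end PowersetCard

section Sites

/-- Translation of the sites by one to the right, used to identify `{1, ..., L}` with
`{2, ..., L + 1}`. -/
def shift : ℕ ↪ ℕ := addRightEmbedding 1

lemma sites_succ_eq_insert_last (L : ℕ) : sites (L + 1) = insert (L + 1) (sites L) := by
  ext n
  simp only [sites, mem_Icc, mem_insert]
  omega

lemma last_notMem_sites (L : ℕ) : L + 1 ∉ sites L := by
  simp [sites]

lemma sites_succ_eq_insert_one (L : ℕ) : sites (L + 1) = insert 1 ((sites L).map shift) := by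
  have map_shift : (sites L).map shift = Icc (1 + 1) (L + 1) := map_add_right_Icc 1 L 1
  rw [map_shift]
  ext n
  simp only [sites, mem_Icc, mem_insert]
  omega

lemma one_notMem_map_shift {L : ℕ} {B : Finset ℕ} (hB : B ⊆ sites L) : 1 ∉ B.map shift := by
  intro h
  obtain ⟨n, hn, hn1⟩ := mem_map.1 h
  have hpos : 1 ≤ n := (mem_Icc.1 (hB hn)).1
  have : n + 1 = 1 := hn1
  omega

end Sites

section Weight

lemma wgt_empty (L : ℕ) : wgt L ∅ = 0 := rfl

lemma wgt_insert (L : ℕ) {x : ℕ} {B : Finset ℕ} (hx : x ∉ B) :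
    wgt L (insert x B) = wgt L B + (L - x - #B) := by
  have triangle : (#B + 1) * (#B + 1 + 1) / 2 = #B * (#B + 1) / 2 + (#B + 1) := by
    simpa only [Nat.add_sub_cancel, mul_comm] using Nat.triangle_succ (#B + 1)
  rw [wgt, wgt, sum_insert hx, card_insert_of_notMem hx, triangle]
  push_cast
  ring

lemma wgt_succ (L : ℕ) (B : Finset ℕ) : wgt (L + 1) B = wgt L B + #B := by
  simp only [wgt, Nat.cast_add, Nat.cast_one, sum_sub_distrib, sum_add_distrib, sum_const,
    nsmul_eq_mul]
  ring

lemma wgt_map_shift (L : ℕ) (B : Finset ℕ) : wgt (L + 1) (B.map shift) = wgt L B := by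
  simp only [wgt, shift, sum_map, card_map, addRightEmbedding_apply, Nat.cast_add, Nat.cast_one,
    add_sub_add_right_eq_sub]

lemma wgt_insert_last {L : ℕ} {B : Finset ℕ} (hB : B ⊆ sites L) :
    wgt (L + 1) (insert (L + 1) B) = wgt L B := by
  rw [wgt_insert _ fun h ↦ last_notMem_sites L (hB h), wgt_succ]
  push_cast
  ring

lemma wgt_insert_one {L : ℕ} {B : Finset ℕ} (hB : B ⊆ sites L) :
    wgt (L + 1) (insert 1 (B.map shift)) = wgt L B + (L - #B) := by
  rw [wgt_insert _ (one_notMem_map_shift hB), wgt_map_shift, card_map]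
  push_cast
  ring

lemma wgt_nonneg {L : ℕ} {B : Finset ℕ} (hB : B ⊆ sites L) : 0 ≤ wgt L B := by
  induction B using Finset.induction_on_min with
  | empty => exact (wgt_empty L).ge
  | insert x B hmin ih =>
    obtain ⟨hx, hBL⟩ := insert_subset_iff.1 hB
    have hsub : B ⊆ Ioc x L := fun n hn ↦ mem_Ioc.2 ⟨hmin n hn, (mem_Icc.1 (hBL hn)).2⟩
    have hcard : #B ≤ L - x := (card_le_card hsub).trans_eq (Nat.card_Ioc x L)
    have hxL : x ≤ L := (mem_Icc.1 hx).2
    rw [wgt_insert L fun h ↦ (hmin x h).false]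
    have := ih hBL
    omega

lemma zpow_wgt_add {G : Type*} [GroupWithZero G] (q : G) {L : ℕ} {B : Finset ℕ}
    (hB : B ⊆ sites L) (k : ℕ) :
    q ^ (wgt L B + k) = q ^ wgt L B * q ^ k := by
  -- At `q = 0` exponents of opposite signs do not add, so nonnegativity is essential.
  have := wgt_nonneg hB
  rw [zpow_add' (by omega), zpow_natCast]

end Weight

section ClosedASEP

variable {K : Type*} [Field K]

/-- The `N`-particle partition function `Z_{L,N}` of the closed ASEP on `L` sites: the total mass
of the unnormalized stationary weights. -/
def partitionFunction (q : K) (L N : ℕ) : K := ∑ B ∈ W L N, q ^ wgt L B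

/-- The stationary density `ρ_n` of the closed ASEP with `N` particles on `L` sites: the
probability that site `n` is occupied. Weights are normalized by the partition function, which for
`N ≤ L` is the Gaussian binomial `[L choose N]_q`. -/
def density (q : K) (L N n : ℕ) : K :=
  (∑ B ∈ W L N with n ∈ B, q ^ wgt L B) / partitionFunction q L N

section PartitionFunction

variable (q : K)

lemma partitionFunction_zero_right (L : ℕ) : partitionFunction q L 0 = 1 := by
  simp [partitionFunction, W, wgt_empty]

lemma sum_zpow_wgt_last_mem (L N : ℕ) :
    ∑ B ∈ W (L + 1) (N + 1) with L + 1 ∈ B, q ^ wgt (L + 1) B = partitionFunction q L N := by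
  rw [W, sites_succ_eq_insert_last, sum_filter_mem_powersetCard_insert (last_notMem_sites L)]
  exact sum_congr rfl fun B hB ↦ by rw [wgt_insert_last (mem_powersetCard.1 hB).1]

lemma sum_zpow_wgt_last_notMem (L N : ℕ) :
    ∑ B ∈ W (L + 1) N with L + 1 ∉ B, q ^ wgt (L + 1) B = q ^ N * partitionFunction q L N := by
  rw [W, sites_succ_eq_insert_last, filter_notMem_powersetCard_insert (last_notMem_sites L),
    partitionFunction, mul_sum]
  refine sum_congr rfl fun B hB ↦ ?_
  obtain ⟨hsub, rfl⟩ := mem_powersetCard.1 hB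
  rw [wgt_succ, zpow_wgt_add q hsub, mul_comm]

lemma sum_zpow_wgt_one_mem {L N : ℕ} (hN : N ≤ L) :
    ∑ B ∈ W (L + 1) (N + 1) with 1 ∈ B, q ^ wgt (L + 1) B
      = q ^ (L - N) * partitionFunction q L N := by
  rw [W, sites_succ_eq_insert_one,
    sum_filter_mem_powersetCard_insert (one_notMem_map_shift Subset.rfl), powersetCard_map, sum_map,
    partitionFunction, mul_sum]
  refine sum_congr rfl fun B hB ↦ ?_
  obtain ⟨hsub, rfl⟩ := mem_powersetCard.1 hB
  rw [RelEmbedding.coe_toEmbedding, mapEmbedding_apply, wgt_insert_one hsub, ← Nat.cast_sub hN,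
    zpow_wgt_add q hsub, mul_comm]

lemma sum_zpow_wgt_one_notMem (L N : ℕ) :
    ∑ B ∈ W (L + 1) N with 1 ∉ B, q ^ wgt (L + 1) B = partitionFunction q L N := by
  rw [W, sites_succ_eq_insert_one,
    filter_notMem_powersetCard_insert (one_notMem_map_shift Subset.rfl), powersetCard_map, sum_map]
  exact sum_congr rfl fun B _ ↦ by
    rw [RelEmbedding.coe_toEmbedding, mapEmbedding_apply, wgt_map_shift]

lemma partitionFunction_succ_succ (L N : ℕ) :
    partitionFunction q (L + 1) (N + 1)
      = partitionFunction q L N + q ^ (N + 1) * partitionFunction q L (N + 1) := by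
  rw [← sum_zpow_wgt_last_mem q L N, ← sum_zpow_wgt_last_notMem q L (N + 1),
    sum_filter_add_sum_filter_not, partitionFunction]

lemma partitionFunction_succ_succ' {L N : ℕ} (hN : N ≤ L) :
    partitionFunction q (L + 1) (N + 1)
      = q ^ (L - N) * partitionFunction q L N + partitionFunction q L (N + 1) := by
  rw [← sum_zpow_wgt_one_mem q hN, ← sum_zpow_wgt_one_notMem q L (N + 1),
    sum_filter_add_sum_filter_not, partitionFunction]

lemma one_sub_pow_mul_partitionFunction_succ_succ {L N : ℕ} (hN : N ≤ L) :
    (1 - q ^ (N + 1)) * partitionFunction q (L + 1) (N + 1)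
      = (1 - q ^ (L + 1)) * partitionFunction q L N := by
  have hpow : q ^ (L + 1) = q ^ (N + 1) * q ^ (L - N) := by
    rw [← pow_add]
    congr 1
    omega
  linear_combination partitionFunction_succ_succ q L N
    - q ^ (N + 1) * partitionFunction_succ_succ' q hN + partitionFunction q L N * hpow

end PartitionFunction

section Normalization

variable {q : K} {L N : ℕ}

lemma partitionFunction_eq_prod (hN : N ≤ L) (hq : ∀ i ∈ Icc 1 N, q ^ i ≠ 1) :
    partitionFunction q L N = ∏ i ∈ Icc 1 N, (1 - q ^ (L - N + i)) / (1 - q ^ i) := by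
  induction N generalizing L with
  | zero => simp [partitionFunction_zero_right]
  | succ N ih =>
    obtain ⟨L, rfl⟩ : ∃ M, L = M + 1 := ⟨L - 1, by omega⟩
    have hNL : N ≤ L := Nat.le_of_succ_le_succ hN
    have hqN : 1 - q ^ (N + 1) ≠ 0 := sub_ne_zero.2 (hq _ (right_mem_Icc.2 (by omega))).symm
    rw [prod_Icc_succ_top (by omega), Nat.sub_add_cancel hN, Nat.add_sub_add_right,
      ← ih hNL fun i hi ↦ hq i (Icc_subset_Icc_right N.le_succ hi), mul_div_assoc',
      eq_div_iff hqN, mul_comm, one_sub_pow_mul_partitionFunction_succ_succ q hNL, mul_comm]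

lemma partitionFunction_ne_zero (hN : N ≤ L) (hq : ∀ i ∈ Icc 1 L, q ^ i ≠ 1) :
    partitionFunction q L N ≠ 0 := by
  have one_sub_ne_zero {i : ℕ} (h1 : 1 ≤ i) (hL : i ≤ L) : 1 - q ^ i ≠ 0 :=
    sub_ne_zero.2 (hq i (mem_Icc.2 ⟨h1, hL⟩)).symm
  rw [partitionFunction_eq_prod hN fun i hi ↦ hq i (Icc_subset_Icc_right hN hi)]
  refine prod_ne_zero_iff.2 fun i hi ↦ ?_
  obtain ⟨h1, hiN⟩ := mem_Icc.1 hi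
  exact div_ne_zero (one_sub_ne_zero (by omega) (by omega)) (one_sub_ne_zero h1 (by omega))

end Normalization

section Density

lemma density_zero (q : K) (L n : ℕ) : density q L 0 n = 0 := by
  simp [density, W, sum_filter]

lemma sum_div_partitionFunction_mul_sum (q : K) (L N : ℕ) (r : ℕ → K) :
    ∑ B ∈ W L N, q ^ wgt L B / partitionFunction q L N * ∑ n ∈ B, r n
      = ∑ n ∈ sites L, r n * density q L N n := by
  have sum_eq_sum_sites {B : Finset ℕ} (hB : B ∈ W L N) :
      ∑ n ∈ B, r n = ∑ n ∈ sites L, if n ∈ B then r n else 0 := by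
    rw [sum_ite_mem, inter_eq_right.2 (mem_powersetCard.1 hB).1]
  rw [sum_congr rfl fun B hB ↦ by rw [sum_eq_sum_sites hB, mul_sum], sum_comm]
  refine sum_congr rfl fun n _ ↦ ?_
  rw [density, sum_div, mul_sum, sum_filter]
  exact sum_congr rfl fun B _ ↦ by split_ifs <;> ring

variable {q : K} {L N : ℕ}

lemma sum_density (hN : N ≤ L) (hq : ∀ i ∈ Icc 1 L, q ^ i ≠ 1) :
    ∑ n ∈ sites L, density q L N n = N := by
  have h := sum_div_partitionFunction_mul_sum q L N fun _ ↦ 1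
  simp only [one_mul] at h
  have card_eq {B : Finset ℕ} (hB : B ∈ W L N) : ∑ _n ∈ B, (1 : K) = N := by
    rw [sum_const, nsmul_one, (mem_powersetCard.1 hB).2]
  rw [← h, sum_congr rfl fun B hB ↦ by rw [card_eq hB], ← sum_mul, ← sum_div, ← partitionFunction,
    div_self (partitionFunction_ne_zero hN hq), one_mul]

lemma partitionFunction_div_succ_succ (hN : N ≤ L) (hq : ∀ i ∈ Icc 1 (L + 1), q ^ i ≠ 1) :
    partitionFunction q L N / partitionFunction q (L + 1) (N + 1)
      = (1 - q ^ (N + 1)) / (1 - q ^ (L + 1)) := by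
  have hqL : 1 - q ^ (L + 1) ≠ 0 := sub_ne_zero.2 (hq _ (right_mem_Icc.2 (by omega))).symm
  rw [div_eq_div_iff (partitionFunction_ne_zero (by omega) hq) hqL,
    one_sub_pow_mul_partitionFunction_succ_succ q hN, mul_comm]

lemma density_last (hL : 1 ≤ L) (hN : N ≤ L) (hq : ∀ i ∈ Icc 1 L, q ^ i ≠ 1) :
    density q L N L = (1 - q ^ N) / (1 - q ^ L) := by
  obtain ⟨L, rfl⟩ : ∃ M, L = M + 1 := ⟨L - 1, by omega⟩
  cases N with
  | zero => simp [density_zero]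
  | succ N =>
    rw [density, sum_zpow_wgt_last_mem, partitionFunction_div_succ_succ (by omega) hq]

lemma density_one (hL : 1 ≤ L) (hN : N ≤ L) (hq : ∀ i ∈ Icc 1 L, q ^ i ≠ 1) :
    density q L N 1 = q ^ (L - N) * ((1 - q ^ N) / (1 - q ^ L)) := by
  obtain ⟨L, rfl⟩ : ∃ M, L = M + 1 := ⟨L - 1, by omega⟩
  cases N with
  | zero => simp [density_zero]
  | succ N =>
    have hNL : N ≤ L := Nat.le_of_succ_le_succ hN
    rw [density, sum_zpow_wgt_one_mem q hNL, mul_div_assoc,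
      partitionFunction_div_succ_succ hNL hq, Nat.add_sub_add_right]

end Density

lemma sum_boundary_rates_mul {R : Type*} [CommRing R] {L : ℕ} (hL : 2 ≤ L) (α a : R)
    (ρ : ℕ → R) :
    ∑ n ∈ sites L, (if n = 1 then α else if n = L then 0 else a) * ρ n
      = a * ∑ n ∈ sites L, ρ n + (α - a) * ρ 1 - a * ρ L := by
  have rate_eq (n : ℕ) : (if n = 1 then α else if n = L then 0 else a) * ρ n
      = a * ρ n + (if n = 1 then (α - a) * ρ n else 0) - (if n = L then a * ρ n else 0) := by
    split_ifs <;> first | omega | ring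
  have one_mem : 1 ∈ sites L := mem_Icc.2 ⟨le_rfl, by omega⟩
  have last_mem : L ∈ sites L := mem_Icc.2 ⟨by omega, le_rfl⟩
  simp only [rate_eq, sum_sub_distrib, sum_add_distrib, sum_ite_eq', if_pos one_mem,
    if_pos last_mem, mul_sum]

theorem stmt17_general (L N : ℕ) (hL : 2 ≤ L) (hN : N ≤ L) (q α a : K)
    (hq : ∀ i ∈ Icc 1 L, q ^ i ≠ 1) :
    ∑ B ∈ W L N,
        (q ^ wgt L B / ∏ i ∈ Icc 1 N, (1 - q ^ (L - N + i)) / (1 - q ^ i)) *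
          (∑ n ∈ B, if n = 1 then α else if n = L then 0 else a)
      = (a * ((N : K) - 1) + a * q ^ N + (α - a) * q ^ (L - N)
          + (a - α - a * (N : K)) * q ^ L) / (1 - q ^ L) := by
  have hqL : 1 - q ^ L ≠ 0 := sub_ne_zero.2 (hq L (right_mem_Icc.2 (by omega))).symm
  have hpow : q ^ (L - N) * q ^ N = q ^ L := by rw [← pow_add, Nat.sub_add_cancel hN]
  rw [← partitionFunction_eq_prod hN fun i hi ↦ hq i (Icc_subset_Icc_right hN hi),
    sum_div_partitionFunction_mul_sum, sum_boundary_rates_mul hL, sum_density hN hq,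
    density_one (by omega) hN hq, density_last (by omega) hN hq, eq_div_iff hqL]
  field_simp
  linear_combination (a - α) * hpow

end ClosedASEP

/-- for site rates `α_1 = α`, `α_n = a` for `2 ≤ n ≤ L−1`, `α_L = 0`, the
sector-`N` expectation of the total adsorption rate under the normalized closed-ASEP
stationary measure `P_N(B) = q^{w(B)}/[L choose N]_q` is
`A_N = (a(N−1) + a q^N + (α − a) q^{L−N} + (a − α − aN) q^L)/(1 − q^L)`. -/
theorem stmt17 (L N : ℕ) (hL : 2 ≤ L) (hN : N ≤ L) (q α a : ℝ)
    (hq0 : 0 < q) (hq1 : q < 1) :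
    ∑ B ∈ W L N,
        (q ^ wgt L B / ∏ i ∈ Finset.Icc 1 N, (1 - q ^ (L - N + i)) / (1 - q ^ i)) *
          (∑ n ∈ B, if n = 1 then α else if n = L then 0 else a)
      = (a * ((N : ℝ) - 1) + a * q ^ N + (α - a) * q ^ (L - N)
          + (a - α - a * (N : ℝ)) * q ^ L) / (1 - q ^ L) := by
  exact stmt17_general L N hL hN q α a fun i hi ↦
    (pow_lt_one₀ hq0.le hq1 (by have := (mem_Icc.1 hi).1; omega)).ne
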